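/- Let d ≥ 1 and D ≥ 3 be integers and let A = {0} ∪ {εᵢ : 1 ≤ i ≤ d} ∪ {(D−1)εᵢ : 1 ≤ i ≤ d} ∪ {εᵢ + (D−1)ε_j : 1 ≤ i, j ≤ d} ⊆ ℕ^d. Then the sumsets regularity of A equals σ(A) = d(D−2). -/

import Mathlib

open Pointwise

/-- The `s`-fold sumset of `A`: `0A = {0}` and `(s+1)A = A + sA`. -/
def sumset {M : Type*} [AddMonoid M] (A : Set M) : ℕ → Set M
  | 0 => {0}
  | s + 1 => A + sumset A s

/-- The discrete simplex `Δ_s = {y ∈ ℕ^d : |y| ≤ sD}`. -/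
def Delta (d D s : ℕ) : Set (Fin d → ℕ) := {y | ∑ j, y j ≤ s * D}

/-- The set `{0, Dε₁, …, Dε_d}`. -/
def Erays (d D : ℕ) : Set (Fin d → ℕ) :=
  insert 0 (Set.range fun i : Fin d => Pi.single i D)

theorem aux_single {d : ℕ} (i : Fin d) (m : ℕ) :
    ∑ j, (Pi.single i m : Fin d → ℕ) j = m := by
  simp

theorem aux_sub {d : ℕ} (w : Fin d → ℕ) (k : ℕ) (hk : k ≤ ∑ j, w j) :
    ∃ v : Fin d → ℕ, (∀ j, v j ≤ w j) ∧ ∑ j, v j = k := by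
  induction k with
  | zero => exact ⟨0, by simp, by simp⟩
  | succ k ih =>
    obtain ⟨v, hv, hs⟩ := ih (by omega)
    have hlt : ∑ j, v j < ∑ j, w j := by omega
    obtain ⟨i, -, hi⟩ := Finset.exists_lt_of_sum_lt hlt
    refine ⟨v + Pi.single i 1, ?_, ?_⟩
    · intro j
      by_cases h : j = i
      · subst h; simp; omega
      · simp [h, hv j]
    · simp [Finset.sum_add_distrib, hs]

theorem aux_split {d : ℕ} (u : Fin d → ℕ) (s : ℕ) (h : ∑ j, u j ≤ s + 1) :
    ∃ b u' : Fin d → ℕ, u = b + u' ∧ ∑ j, u' j ≤ s ∧ (b = 0 ∨ ∃ i, b = Pi.single i 1) := by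
  by_cases h0 : u = 0
  · exact ⟨0, 0, by simp [h0], by simp, Or.inl rfl⟩
  · obtain ⟨i, hi⟩ := Function.ne_iff.1 h0
    have hi' : u i ≠ 0 := hi
    have e : u = Pi.single i 1 + (u - Pi.single i 1) := by
      ext j
      by_cases h : j = i
      · subst h; simp; omega
      · simp [h]
    refine ⟨Pi.single i 1, u - Pi.single i 1, e, ?_, Or.inr ⟨i, rfl⟩⟩
    have : ∑ j, u j = ∑ j, (Pi.single i 1 + (u - Pi.single i 1) : Fin d → ℕ) j := by rw [← e]
    simp only [Pi.add_apply, Finset.sum_add_distrib, aux_single] at this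
    omega

theorem aux_mem {d m : ℕ} (A : Set (Fin d → ℕ))
    (hA : A = {x : Fin d → ℕ | x = 0 ∨ (∃ i : Fin d, x = Pi.single i 1) ∨
      (∃ i : Fin d, x = Pi.single i m) ∨
      (∃ i j : Fin d, x = Pi.single i 1 + Pi.single j m)}) (s : ℕ) (y : Fin d → ℕ) :
    y ∈ sumset A s ↔ ∃ u v : Fin d → ℕ, ∑ j, u j ≤ s ∧ ∑ j, v j ≤ s ∧ y = u + m • v := by
  have hs : ∀ i : Fin d, m • (Pi.single i 1 : Fin d → ℕ) = Pi.single i m := by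
    intro i; rw [← Pi.single_smul]; simp
  induction s generalizing y with
  | zero =>
    simp only [sumset, Set.mem_singleton_iff]
    constructor
    · rintro rfl; exact ⟨0, 0, by simp⟩
    · rintro ⟨u, v, hu, hv, rfl⟩
      have hu0 : u = 0 := by ext j; simpa using (Finset.sum_eq_zero_iff.1 (Nat.le_zero.1 hu)) j
      have hv0 : v = 0 := by ext j; simpa using (Finset.sum_eq_zero_iff.1 (Nat.le_zero.1 hv)) j
      simp [hu0, hv0]
  | succ s ih =>
    simp only [sumset, Set.mem_add]
    constructor
    · rintro ⟨a, ha, z, hz, rfl⟩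
      obtain ⟨u, v, hu, hv, rfl⟩ := (ih z).1 hz
      rw [hA] at ha
      rcases ha with rfl | ⟨i, rfl⟩ | ⟨i, rfl⟩ | ⟨i, j, rfl⟩
      · exact ⟨u, v, by omega, by omega, by simp⟩
      · exact ⟨Pi.single i 1 + u, v, by simp [Finset.sum_add_distrib]; omega, by omega, by abel⟩
      · exact ⟨u, Pi.single i 1 + v, by omega, by simp [Finset.sum_add_distrib]; omega,
          by rw [smul_add, hs]; abel⟩
      · exact ⟨Pi.single i 1 + u, Pi.single j 1 + v, by simp [Finset.sum_add_distrib]; omega,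
          by simp [Finset.sum_add_distrib]; omega, by rw [smul_add, hs]; abel⟩
    · rintro ⟨u, v, hu, hv, rfl⟩
      obtain ⟨b, u', rfl, hu', hb⟩ := aux_split u s hu
      obtain ⟨c, v', rfl, hv', hc⟩ := aux_split v s hv
      refine ⟨b + m • c, ?_, u' + m • v', (ih _).2 ⟨u', v', hu', hv', rfl⟩, ?_⟩
      · rw [hA]
        rcases hb with rfl | ⟨i, rfl⟩ <;> rcases hc with rfl | ⟨j, rfl⟩
        · left; simp
        · right; right; left; exact ⟨j, by rw [hs]; simp⟩
        · right; left; exact ⟨i, by simp⟩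
        · right; right; right; exact ⟨i, j, by rw [hs]⟩
      · rw [smul_add]; abel

theorem stmt_6 (d D : ℕ) (hd : 1 ≤ d) (hD : 3 ≤ D)
    (A : Set (Fin d → ℕ))
    (hA : A = {x : Fin d → ℕ | x = 0 ∨ (∃ i : Fin d, x = Pi.single i 1) ∨
      (∃ i : Fin d, x = Pi.single i (D - 1)) ∨
      (∃ i j : Fin d, x = Pi.single i 1 + Pi.single j (D - 1))}) :
    IsLeast {s : ℕ | sumset A s = Delta d D s ∧
      Delta d D s + Erays d D = Delta d D (s + 1)} (d * (D - 2)) := by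
  obtain ⟨E, rfl⟩ : ∃ E, D = E + 3 := ⟨D - 3, by omega⟩
  have e1 : E + 3 - 1 = E + 2 := rfl
  have e2 : E + 3 - 2 = E + 1 := rfl
  rw [e1] at hA
  rw [e2]
  have key := aux_mem A hA
  constructor
  · refine ⟨?_, ?_⟩
    · generalize hS : d * (E + 1) = s
      ext y
      rw [key]
      simp only [Delta, Set.mem_setOf_eq]
      constructor
      · rintro ⟨u, v, hu, hv, rfl⟩
        simp only [Pi.add_apply, Pi.smul_apply, smul_eq_mul, Finset.sum_add_distrib,
          ← Finset.mul_sum]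
        nlinarith
      · intro hy
        obtain ⟨v, hv, hvs⟩ := aux_sub (fun j => y j / (E + 2))
          (min s (∑ j, y j / (E + 2))) (min_le_right _ _)
        have hle : ∀ j, (E + 2) * v j ≤ y j := fun j =>
          (Nat.mul_le_mul_left _ (hv j)).trans (Nat.mul_div_le _ _)
        have hy' : y = (y - (E + 2) • v) + (E + 2) • v := by
          ext j
          have := hle j
          simp only [Pi.add_apply, Pi.sub_apply, Pi.smul_apply, smul_eq_mul]
          omega
        refine ⟨y - (E + 2) • v, v, ?_, by omega, hy'⟩
        have hsum : ∑ j, y j = ∑ j, (y - (E + 2) • v) j + (E + 2) * ∑ j, v j := by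
          conv_lhs => rw [hy']
          simp only [Pi.add_apply, Pi.smul_apply, smul_eq_mul, Finset.sum_add_distrib,
            ← Finset.mul_sum]
        rcases le_total s (∑ j, y j / (E + 2)) with h | h
        · rw [min_eq_left h] at hvs
          rw [hvs] at hsum
          nlinarith
        · rw [min_eq_right h] at hvs
          rw [hvs] at hsum
          have h2 : ∑ j, y j = ∑ j, y j % (E + 2) + (E + 2) * ∑ j, y j / (E + 2) := by
            rw [Finset.mul_sum, ← Finset.sum_add_distrib]
            exact Finset.sum_congr rfl fun j _ => (Nat.mod_add_div _ _).symm
          have h3 : ∑ j, y j % (E + 2) ≤ ∑ _j : Fin d, (E + 1) :=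
            Finset.sum_le_sum fun j _ => by have := Nat.mod_lt (y j) (show E + 2 > 0 by omega); omega
          simp only [Finset.sum_const, Finset.card_univ, Fintype.card_fin, smul_eq_mul] at h3
          omega
    · ext y
      simp only [Set.mem_add, Delta, Set.mem_setOf_eq, Erays, Set.mem_insert_iff, Set.mem_range]
      constructor
      · rintro ⟨a, ha, b, rfl | ⟨i, rfl⟩, rfl⟩
        · simp only [add_zero]; nlinarith
        · simp only [Pi.add_apply, Finset.sum_add_distrib, aux_single]
          nlinarith
      · intro hy
        by_cases h : ∑ j, y j ≤ d * (E + 1) * (E + 3)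
        · exact ⟨y, h, 0, Or.inl rfl, by simp⟩
        · obtain ⟨i, hi⟩ : ∃ i, E + 3 ≤ y i := by
            by_contra! hc
            have h3 : ∑ j, y j ≤ ∑ _j : Fin d, (E + 2) :=
              Finset.sum_le_sum fun j _ => by have := hc j; omega
            simp only [Finset.sum_const, Finset.card_univ, Fintype.card_fin, smul_eq_mul] at h3
            apply h
            refine h3.trans ?_
            rw [mul_assoc]
            exact Nat.mul_le_mul_left _ (by nlinarith)
          have e : y - Pi.single i (E + 3) + Pi.single i (E + 3) = y := by
            ext j
            by_cases h : j = i
            · subst h; simp; omega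
            · simp [h]
          refine ⟨y - Pi.single i (E + 3), ?_, Pi.single i (E + 3), Or.inr ⟨i, rfl⟩, e⟩
          have : ∑ j, y j = ∑ j, (y - Pi.single i (E + 3) + Pi.single i (E + 3) : Fin d → ℕ) j := by
            rw [e]
          simp only [Pi.add_apply, Finset.sum_add_distrib, aux_single] at this
          nlinarith
  · rintro s ⟨h1, h2⟩
    by_contra! hlt
    obtain ⟨y, hy, hys⟩ := aux_sub (fun _ : Fin d => E + 1) (s + 1) (by simpa using hlt)
    rcases Nat.eq_zero_or_pos s with rfl | hs
    · have hm : (Pi.single ⟨0, hd⟩ 1 : Fin d → ℕ) ∈ Delta d (E + 3) (0 + 1) := by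
        simp [Delta]
      rw [← h2, ← h1] at hm
      simp only [sumset, Set.singleton_add, Set.mem_image, zero_add, Erays, Set.mem_insert_iff,
        Set.mem_range] at hm
      obtain ⟨b, hb, hb2⟩ := hm
      have hsum : ∑ j, b j = 1 := by rw [hb2]; simp
      rcases hb with rfl | ⟨i, rfl⟩
      · simp at hsum
      · simp at hsum
    · have hm : y ∈ Delta d (E + 3) s := by
        simp only [Delta, Set.mem_setOf_eq, hys]
        nlinarith
      rw [← h1, key] at hm
      obtain ⟨u, v, hu, hv, rfl⟩ := hm
      have hv0 : ∀ j, v j = 0 := by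
        intro j
        have := hy j
        simp only [Pi.add_apply, Pi.smul_apply, smul_eq_mul] at this
        by_contra h
        have : 1 ≤ v j := by omega
        nlinarith
      simp [hv0] at hys
      omega
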